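/- For every fixed x ∈ ℝ and q ∈ (0,1], the fourth-order Taylor expansion of u ↦ f_x(u) at u = 0 is: f_x(u) = (1/2)(q−1)q(x²−1)u² − (1/6)(q−1)q(2q−1)x(x²−3)u³ + (1/24)q(−3 + 6x² − x⁴ − 12q²(2 − 4x² + x⁴) + 6q³(2 − 4x² + x⁴) + q(15 − 30x² + 7x⁴))u⁴ + r_x(u)u⁴, where r_x(u) → 0 as u → 0. In particular f_x(0) = 0 and f_x'(0) = 0. -/

import Mathlib

/-!
Write `He₂, He₃, He₄` for the Hermite polynomials. Dividing the mixture in the denominator of `f_x`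
by `φ(x)` gives `f_x(u) = -log (1 + w(u))`, where
`1 + w(u) = q·exp(x y - y²/2) + (1-q)·exp(x y' - y'²/2)`, `y = (1-q)u`, `y' = -qu`.
Each exponential is the generating function of the Hermite polynomials in `x`
(`hermite_gen_isBigO`). The weights make the linear terms cancel, so
`w(u) = A u² + B u³ + C u⁴ + O(u⁵)` with no constant or linear term, and then
`log (1 + w) = w - w²/2 + O(w³)` (`log_one_add_isBigO`) gives
`f_x(u) = -A u² - B u³ - (C - A²/2) u⁴ + O(u⁵)`. This `O(u⁵)` bound yields both the Peano remainder
and, since the main part is `O(u²)`, the vanishing of the derivative at `0`.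
-/

open MeasureTheory ProbabilityTheory Real Filter Topology

/-- The standard normal density `φ(t) = (2π)^{−1/2}·e^{−t²/2}`. -/
noncomputable def stdphi (t : ℝ) : ℝ := (Real.sqrt (2 * π))⁻¹ * Real.exp (-t ^ 2 / 2)

/-- `f_x(u) = ln( φ(x) / ( q·φ(x − (1−q)u) + (1−q)·φ(x + qu) ) )`. -/
noncomputable def fX (q x u : ℝ) : ℝ :=
  Real.log (stdphi x / (q * stdphi (x - (1 - q) * u) + (1 - q) * stdphi (x + q * u)))

open Asymptotics

/-- A continuous multiple of `u ^ n` is `O(u ^ n)` at `0`. -/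
lemma pow_mul_isBigO (n : ℕ) (g : ℝ → ℝ) (hg : Continuous g) :
    (fun u : ℝ => u ^ n * g u) =O[𝓝 0] fun u : ℝ => u ^ n := by
  have h1 : g =O[𝓝 0] fun _ : ℝ => (1 : ℝ) := (hg.tendsto 0).isBigO_one ℝ
  simpa using (isBigO_refl (fun u : ℝ => u ^ n) (𝓝 0)).mul h1

lemma log_one_add_isBigO :
    (fun w : ℝ => Real.log (1 + w) - (w - w ^ 2 / 2)) =O[𝓝 0] fun w : ℝ => w ^ 3 := by
  refine IsBigO.of_bound 2 ?_
  filter_upwards [Metric.ball_mem_nhds (0 : ℝ) (by norm_num : (0 : ℝ) < 1 / 2)] with w hw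
  have hw' : |w| < 1 / 2 := by simpa using hw
  have h := Real.abs_log_sub_add_sum_range_le (x := -w) (by rw [abs_neg]; linarith) 2
  simp only [Finset.sum_range_succ, Finset.sum_range_zero, abs_neg] at h
  rw [Real.norm_eq_abs, Real.norm_eq_abs, abs_pow]
  have e : Real.log (1 + w) - (w - w ^ 2 / 2)
      = 0 + (-w) ^ (0 + 1) / ((0 : ℕ) + 1 : ℝ) + (-w) ^ (1 + 1) / ((1 : ℕ) + 1 : ℝ)
        + Real.log (1 - -w) := by
    rw [sub_neg_eq_add]; push_cast; ring
  rw [e]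
  refine h.trans ?_
  rw [div_le_iff₀ (by linarith)]
  have h3 := pow_nonneg (abs_nonneg w) 3
  norm_num only at *
  nlinarith [mul_nonneg h3 (by linarith : 0 ≤ 1 - 2 * |w|)]

/-- The generating function `exp (x y - y² / 2) = ∑ Heₙ(x) yⁿ / n!`, truncated after `n = 4`
and evaluated at `y = c u`. -/
lemma hermite_gen_isBigO (x c : ℝ) :
    (fun u : ℝ => Real.exp (x * (c * u) - (c * u) ^ 2 / 2)
      - (1 + x * (c * u) + (x ^ 2 - 1) / 2 * (c * u) ^ 2 + (x ^ 3 - 3 * x) / 6 * (c * u) ^ 3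
        + (x ^ 4 - 6 * x ^ 2 + 3) / 24 * (c * u) ^ 4)) =O[𝓝 0] fun u : ℝ => u ^ 5 := by
  have hcont : Continuous fun u : ℝ => x * (c * u) - (c * u) ^ 2 / 2 := by fun_prop
  have ht : Tendsto (fun u : ℝ => x * (c * u) - (c * u) ^ 2 / 2) (𝓝 0) (𝓝 0) := by
    simpa using hcont.tendsto 0
  have hs : (fun u : ℝ => x * (c * u) - (c * u) ^ 2 / 2) =O[𝓝 0] fun u : ℝ => u := by
    have := pow_mul_isBigO 1 (fun u => x * c - c ^ 2 * u / 2) (by fun_prop)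
    simp only [pow_one] at this
    exact this.congr_left fun u => by ring
  have h1 := ((Real.exp_sub_sum_range_isBigO_pow 5).comp_tendsto ht).trans (hs.pow 5)
  -- the part of degree at least five of the Taylor polynomial of `exp` at `x y - y² / 2`
  have h2 := pow_mul_isBigO 5 (fun u => c ^ 5 * (x / 8 - x ^ 3 / 12
    + (x ^ 2 / 16 - 1 / 48) * (c * u) - x / 48 * (c * u) ^ 2 + (c * u) ^ 3 / 384)) (by fun_prop)
  refine (h1.add h2).congr_left fun u => ?_
  simp only [Function.comp, Finset.sum_range_succ, Finset.sum_range_zero, Nat.factorial]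
  push_cast
  ring

lemma stdphi_pos (t : ℝ) : 0 < stdphi t := by
  unfold stdphi; positivity

lemma stdphi_sub (x y : ℝ) :
    stdphi (x - y) = stdphi x * Real.exp (x * y - y ^ 2 / 2) := by
  unfold stdphi
  rw [mul_assoc, ← Real.exp_add]
  ring_nf

lemma fX_eq (q x u : ℝ) :
    fX q x u = -Real.log (1 + (q * Real.exp (x * ((1 - q) * u) - ((1 - q) * u) ^ 2 / 2)
      + (1 - q) * Real.exp (x * (-q * u) - (-q * u) ^ 2 / 2) - 1)) := by
  have h : x + q * u = x - (-q * u) := by ring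
  rw [fX, h, stdphi_sub, stdphi_sub, ← Real.log_inv]
  congr 1
  have := (stdphi_pos x).ne'
  rw [show ∀ a b : ℝ, q * (stdphi x * a) + (1 - q) * (stdphi x * b)
    = stdphi x * (1 + (q * a + (1 - q) * b - 1)) by intros; ring]
  rw [div_mul_eq_div_div, div_self this, one_div]

lemma fX_isBigO (q x : ℝ) :
    (fun u : ℝ => fX q x u - ((1 / 2) * (q - 1) * q * (x ^ 2 - 1) * u ^ 2
        - (1 / 6) * (q - 1) * q * (2 * q - 1) * x * (x ^ 2 - 3) * u ^ 3
        + (1 / 24) * q *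
            (-3 + 6 * x ^ 2 - x ^ 4 - 12 * q ^ 2 * (2 - 4 * x ^ 2 + x ^ 4)
              + 6 * q ^ 3 * (2 - 4 * x ^ 2 + x ^ 4) + q * (15 - 30 * x ^ 2 + 7 * x ^ 4)) * u ^ 4))
      =O[𝓝 0] fun u : ℝ => u ^ 5 := by
  obtain ⟨w, hw⟩ : ∃ w : ℝ → ℝ, w = fun u =>
    q * Real.exp (x * ((1 - q) * u) - ((1 - q) * u) ^ 2 / 2)
      + (1 - q) * Real.exp (x * (-q * u) - (-q * u) ^ 2 / 2) - 1 := ⟨_, rfl⟩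
  -- the coefficients are `Heₙ(x) / n!` times the `n`-th central moment of Bernoulli(`q`)
  obtain ⟨A, hA⟩ : ∃ A, A = q * (1 - q) * (x ^ 2 - 1) / 2 := ⟨_, rfl⟩
  obtain ⟨B, hB⟩ : ∃ B, B = q * (1 - q) * (1 - 2 * q) * (x ^ 3 - 3 * x) / 6 := ⟨_, rfl⟩
  obtain ⟨C, hC⟩ : ∃ C, C = q * (1 - q) * (1 - 3 * q + 3 * q ^ 2)
    * (x ^ 4 - 6 * x ^ 2 + 3) / 24 := ⟨_, rfl⟩
  have hwW : (fun u => w u - (A * u ^ 2 + B * u ^ 3 + C * u ^ 4)) =O[𝓝 0] fun u : ℝ => u ^ 5 := by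
    refine (((hermite_gen_isBigO x (1 - q)).const_mul_left q).add
      ((hermite_gen_isBigO x (-q)).const_mul_left (1 - q))).congr_left fun u => ?_
    rw [hw, hA, hB, hC]
    ring
  have h52 : (fun u : ℝ => u ^ 5) =O[𝓝 0] fun u : ℝ => u ^ 2 :=
    (isLittleO_pow_pow (by norm_num : 2 < 5)).isBigO
  have hW2 : (fun u : ℝ => A * u ^ 2 + B * u ^ 3 + C * u ^ 4) =O[𝓝 0] fun u : ℝ => u ^ 2 :=
    (pow_mul_isBigO 2 (fun u => A + B * u + C * u ^ 2) (by fun_prop)).congr_left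
      fun u => by ring
  have hw2 : w =O[𝓝 0] fun u : ℝ => u ^ 2 :=
    ((hwW.trans h52).add hW2).congr_left fun u => by ring
  have hw0 : Tendsto w (𝓝 0) (𝓝 0) := by
    have hc : Continuous w := by rw [hw]; fun_prop
    have h0 : w 0 = 0 := by rw [hw]; simp
    simpa [h0] using hc.tendsto 0
  have hlog : (fun u => Real.log (1 + w u) - (w u - w u ^ 2 / 2)) =O[𝓝 0] fun u : ℝ => u ^ 5 := by
    refine ((log_one_add_isBigO.comp_tendsto hw0).trans (hw2.pow 3)).trans ?_
    exact (pow_mul_isBigO 5 (fun u => u) continuous_id).congr_left fun u => by ring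
  have hsq : (fun u => (w u - (A * u ^ 2 + B * u ^ 3 + C * u ^ 4))
      * (w u + (A * u ^ 2 + B * u ^ 3 + C * u ^ 4))) =O[𝓝 0] fun u : ℝ => u ^ 5 := by
    refine (hwW.mul (hw2.add hW2)).trans ?_
    exact pow_mul_isBigO 5 (fun u => u ^ 2) (by fun_prop)
  have hrest := pow_mul_isBigO 5
    (fun u => A * B + (B ^ 2 + 2 * A * C) / 2 * u + B * C * u ^ 2 + C ^ 2 / 2 * u ^ 3)
    (by fun_prop)
  refine ((((hsq.const_mul_left (1 / 2)).sub hlog).sub hwW).add hrest).congr_left fun u => ?_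
  have hf : fX q x u = -Real.log (1 + w u) := by rw [fX_eq, hw]
  rw [hf]
  generalize Real.log (1 + w u) = L
  generalize w u = v
  subst hA hB hC
  ring

/-- The fourth-order Taylor expansion of `u ↦ f_x(u)` at `u = 0`, with Peano remainder
`r_x(u)·u⁴` where `r_x(u) → 0` as `u → 0`; in particular `f_x(0) = 0` and `f_x'(0) = 0`. -/
theorem fX_taylor_fourth_order (q : ℝ) (hq : q ∈ Set.Ioc (0 : ℝ) 1) (x : ℝ) :
    (∃ r : ℝ → ℝ, Tendsto r (𝓝 0) (𝓝 0) ∧ ∀ u : ℝ,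
      fX q x u =
        (1 / 2) * (q - 1) * q * (x ^ 2 - 1) * u ^ 2
        - (1 / 6) * (q - 1) * q * (2 * q - 1) * x * (x ^ 2 - 3) * u ^ 3
        + (1 / 24) * q *
            (-3 + 6 * x ^ 2 - x ^ 4 - 12 * q ^ 2 * (2 - 4 * x ^ 2 + x ^ 4)
              + 6 * q ^ 3 * (2 - 4 * x ^ 2 + x ^ 4) + q * (15 - 30 * x ^ 2 + 7 * x ^ 4)) * u ^ 4
        + r u * u ^ 4) ∧
    fX q x 0 = 0 ∧ deriv (fX q x) 0 = 0 := by
  have h0 : fX q x 0 = 0 := by rw [fX_eq]; simp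
  have hO := fX_isBigO q x
  refine ⟨⟨_, (hO.trans_isLittleO
    (isLittleO_pow_pow (by norm_num : 4 < 5))).tendsto_div_nhds_zero, fun u => ?_⟩, h0, ?_⟩
  · rcases eq_or_ne u 0 with rfl | hu
    · simp [h0]
    · rw [div_mul_cancel₀ _ (pow_ne_zero 4 hu)]
      ring
  · have hP := pow_mul_isBigO 2 (fun u => (1 / 2) * (q - 1) * q * (x ^ 2 - 1)
        - (1 / 6) * (q - 1) * q * (2 * q - 1) * x * (x ^ 2 - 3) * u
        + (1 / 24) * q *
            (-3 + 6 * x ^ 2 - x ^ 4 - 12 * q ^ 2 * (2 - 4 * x ^ 2 + x ^ 4)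
              + 6 * q ^ 3 * (2 - 4 * x ^ 2 + x ^ 4)
              + q * (15 - 30 * x ^ 2 + 7 * x ^ 4)) * u ^ 2) (by fun_prop)
    have hf : fX q x =O[𝓝 0] fun u : ℝ => u ^ 2 :=
      ((hO.trans (isLittleO_pow_pow (by norm_num : 2 < 5)).isBigO).add hP).congr_left
        fun u => by ring
    have hd : HasDerivAt (fX q x) 0 0 := by
      rw [hasDerivAt_iff_isLittleO]
      have h21 : (fun u : ℝ => u ^ 2) =o[𝓝 0] fun u : ℝ => u := by
        simpa using isLittleO_pow_pow (𝕜 := ℝ) (by norm_num : 1 < 2)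
      simpa [h0] using hf.trans_isLittleO h21
    exact hd.deriv
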